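/- Let G be a bipartite graph on finite vertex sets X and Y, and let M be its adjacency matrix over ℝ (M(x,y) = 1 if (x,y) is an edge and 0 otherwise). If G has a projective realization of dimension d over a finite field F with q elements such that the realization has intersection dimension 1, then rank_ℝ(M) ≤ (q^d − 1)/(q − 1). -/

import Mathlib

open scoped Classical

/-- A projective realization of a bipartite graph over a field `F`. -/
def IsProjRealization (F : Type) [Field F] {X Y : Type} (E : X → Y → Prop) (d : ℕ)
    (φX : X → Submodule F (Fin d → F)) (φY : Y → Submodule F (Fin d → F)) : Prop :=
  ∀ x y, E x y ↔ φX x ⊓ φY y ≠ ⊥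

/-- If a bipartite graph has a projective realization of dimension `d` with
intersection dimension `1` over a finite field with `q` elements, then the real rank
of its adjacency matrix is at most `(q^d − 1)/(q − 1)`. -/
theorem stmt_5 (F : Type) [Field F] [Fintype F] (q : ℕ) (hq : q = Fintype.card F)
    (X Y : Type) [Fintype X] [Fintype Y]
    (E : X → Y → Prop) (M : Matrix X Y ℝ)
    (hM : ∀ x y, M x y = if E x y then 1 else 0)
    (d : ℕ) (φX : X → Submodule F (Fin d → F)) (φY : Y → Submodule F (Fin d → F))
    (hreal : IsProjRealization F E d φX φY)
    (hint : ∀ x y, Module.finrank F ↥(φX x ⊓ φY y) ≤ 1) :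
    M.rank ≤ (q ^ d - 1) / (q - 1) := by
  have : Fintype (Projectivization F (Fin d → F)) := Fintype.ofFinite _
  let A : Matrix X (Projectivization F (Fin d → F)) ℝ :=
    fun x p => if p.submodule ≤ φX x then 1 else 0
  let B : Matrix (Projectivization F (Fin d → F)) Y ℝ :=
    fun p y => if p.submodule ≤ φY y then 1 else 0
  have key : M = A * B := by
    ext x y
    have h1 : (A * B) x y = ∑ p : Projectivization F (Fin d → F),
        if p.submodule ≤ φX x ⊓ φY y then (1 : ℝ) else 0 := by
      rw [Matrix.mul_apply]
      refine Finset.sum_congr rfl fun p _ => ?_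
      simp only [A, B, le_inf_iff]
      by_cases ha : p.submodule ≤ φX x <;> by_cases hb : p.submodule ≤ φY y <;> simp [ha, hb]
    rw [h1, hM]
    by_cases hE : E x y
    · have hne := (hreal x y).1 hE
      have hpos : Module.finrank F ↥(φX x ⊓ φY y) ≠ 0 := fun h =>
        hne (Submodule.finrank_eq_zero.1 h)
      have hone : Module.finrank F ↥(φX x ⊓ φY y) = 1 := by
        have := hint x y
        omega
      rw [if_pos hE, Finset.sum_eq_single (Projectivization.mk'' (φX x ⊓ φY y) hone)]
      · rw [Projectivization.submodule_mk'', if_pos le_rfl]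
      · intro p _ hp
        rw [if_neg]
        intro hle
        apply hp
        apply Projectivization.submodule_injective
        rw [Projectivization.submodule_mk'']
        exact Submodule.eq_of_le_of_finrank_eq hle (by rw [hone, p.finrank_submodule])
      · intro h
        exact absurd (Finset.mem_univ _) h
    · have hbot : φX x ⊓ φY y = ⊥ := by
        by_contra h
        exact hE ((hreal x y).2 h)
      rw [if_neg hE, hbot]
      symm
      refine Finset.sum_eq_zero fun p _ => ?_
      rw [if_neg]
      intro hle
      have h := p.finrank_submodule
      rw [le_bot_iff.1 hle] at h
      simp at h
  have hc := Projectivization.card'' F (Fin d → F)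
  have hV : Nat.card (Fin d → F) = q ^ d := by simp [hq, Nat.card_fun]
  have hk : Nat.card F = q := by simp [hq]
  rw [hV, hk, Nat.card_eq_fintype_card] at hc
  rw [← hc, key]
  exact (Matrix.rank_mul_le_left A B).trans A.rank_le_card_width
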